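/- For all integers n ≥ 0 and k ≥ 0, the number of words in [k]^n avoiding the pattern 112 equals ∑_{j=0}^{k} C(n+k-j-1, n) · c(n, n-j), where c(n,m) denotes the signless Stirling number of the first kind, i.e., the number of permutations of {1,...,n} with exactly m right-to-left minima (equivalently, with exactly m cycles). The same formula holds for the pattern 121. -/

import Mathlib

/-- A word `σ ∈ [k]^n` (encoded as `σ : Fin n → Fin k`) contains the pattern `τ`
(encoded as a list of natural numbers) if there is a strictly increasing choice of
positions on which `σ` is order-isomorphic to `τ`. -/
def WordContains {n k : ℕ} (σ : Fin n → Fin k) (τ : List ℕ) : Prop :=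
  ∃ f : Fin τ.length → Fin n, StrictMono f ∧
    ∀ a b : Fin τ.length,
      (σ (f a) < σ (f b) ↔ τ.get a < τ.get b) ∧
      (σ (f a) = σ (f b) ↔ τ.get a = τ.get b)

/-- `avoiders n k T` is the number of words in `[k]^n` that avoid every pattern in `T`,
i.e. `f_T(n,k)`. -/
noncomputable def avoiders (n k : ℕ) (T : Set (List ℕ)) : ℕ :=
  Nat.card {σ : Fin n → Fin k // ∀ τ ∈ T, ¬ WordContains σ τ}

/-- The number of right-to-left minima of a permutation of `{1,…,n}`:
positions `r` such that `π r < π s` for all `s > r`. -/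
def rlMinCount {n : ℕ} (π : Equiv.Perm (Fin n)) : ℕ :=
  (Finset.univ.filter (fun r : Fin n => ∀ s, r < s → π r < π s)).card

/-- The signless Stirling number of the first kind `c(n,m)`: the number of
permutations of `{1,…,n}` with exactly `m` right-to-left minima. -/
noncomputable def stirC (n m : ℕ) : ℕ :=
  Nat.card {π : Equiv.Perm (Fin n) // rlMinCount π = m}

/-!
Classify the words by whether they use the smallest letter. Those that do not are words over one
letter fewer. From those that do, delete the last smallest letter. If another smallest letter
remains, the deleted one can be put back in exactly one place: at the end of the word for `112`,
right after the last remaining smallest letter for `121`. If none remains, it can be put back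
anywhere, since a single smallest letter takes part in no copy of a pattern whose minimum is
repeated. In both cases this gives
`f (n + 1) (k + 1) = f (n + 1) k + f n (k + 1) + n * f n k`,
which the sum of the theorem also satisfies, by the Pascal and Stirling recurrences.
-/

open Set

section Patterns

variable {m n k l : ℕ} {σ : Fin n → Fin k} {τ : List ℕ}

theorem WordContains.of_comp {g : Fin m → Fin n} (hg : StrictMono g)
    (h : WordContains (σ ∘ g) τ) : WordContains σ τ :=
  let ⟨f, hf, hτ⟩ := h
  ⟨g ∘ f, hg.comp hf, hτ⟩

theorem wordContains_comp_iff {g : Fin k → Fin l} (hg : StrictMono g) :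
    WordContains (g ∘ σ) τ ↔ WordContains σ τ := by
  simp only [WordContains, Function.comp_apply, hg.lt_iff_lt, hg.injective.eq_iff]

theorem cmp_eq_cmp_iff {α β : Type*} [LinearOrder α] [LinearOrder β] {x y : α} {x' y' : β} :
    cmp x y = cmp x' y' ↔ (x < y ↔ x' < y') ∧ (x = y ↔ x' = y') := by
  refine ⟨fun h ↦ ⟨lt_iff_lt_of_cmp_eq_cmp h, eq_iff_eq_of_cmp_eq_cmp h⟩, fun ⟨hlt, heq⟩ ↦ ?_⟩
  rcases lt_trichotomy x y with h | h | h
  · rw [(cmp_eq_lt_iff x y).2 h, (cmp_eq_lt_iff x' y').2 (hlt.1 h)]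
  · rw [(cmp_eq_eq_iff x y).2 h, (cmp_eq_eq_iff x' y').2 (heq.1 h)]
  · have h' : y' < x' := by grind
    rw [(cmp_eq_gt_iff x y).2 h, (cmp_eq_gt_iff x' y').2 h']

theorem wordContains_triple_iff {a b c : ℕ} :
    WordContains σ [a, b, c] ↔ ∃ i j l, i < j ∧ j < l ∧
      cmp (σ i) (σ j) = cmp a b ∧ cmp (σ j) (σ l) = cmp b c ∧ cmp (σ i) (σ l) = cmp a c := by
  simp only [WordContains, ← cmp_eq_cmp_iff]
  constructor
  · rintro ⟨f, hf, h⟩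
    exact ⟨f (0 : Fin 3), f (1 : Fin 3), f (2 : Fin 3), hf (by decide : (0 : Fin 3) < 1),
      hf (by decide : (1 : Fin 3) < 2), h (0 : Fin 3) (1 : Fin 3), h (1 : Fin 3) (2 : Fin 3),
      h (0 : Fin 3) (2 : Fin 3)⟩
  · rintro ⟨i, j, l, hij, hjl, hab, hbc, hac⟩
    have hf : StrictMono (![i, j, l] : Fin 3 → Fin n) := by
      rw [Fin.strictMono_iff_lt_succ]
      simp [Fin.forall_fin_two, hij, hjl]
    refine ⟨_, hf, fun x y ↦ ?_⟩
    change Fin 3 at x y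
    fin_cases x <;> fin_cases y <;>
      first | assumption | exact cmp_eq_cmp_symm.1 ‹_› | simp

theorem wordContains_112_iff :
    WordContains σ [1, 1, 2] ↔ ∃ i j l, i < j ∧ j < l ∧ σ i = σ j ∧ σ j < σ l := by
  have h12 : cmp 1 2 = Ordering.lt := rfl
  simp only [wordContains_triple_iff, cmp_self_eq_eq, h12, cmp_eq_eq_iff, cmp_eq_lt_iff]
  grind

theorem wordContains_121_iff :
    WordContains σ [1, 2, 1] ↔ ∃ i j l, i < j ∧ j < l ∧ σ i = σ l ∧ σ i < σ j := by
  have h12 : cmp 1 2 = Ordering.lt := rfl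
  have h21 : cmp 2 1 = Ordering.gt := rfl
  simp only [wordContains_triple_iff, cmp_self_eq_eq, h12, h21, cmp_eq_eq_iff, cmp_eq_lt_iff,
    cmp_eq_gt_iff]
  grind

/-- The smallest letter of the pattern `τ` occurs at least twice. -/
def HasRepeatedMin (τ : List ℕ) : Prop :=
  ∃ a b : Fin τ.length, a ≠ b ∧ τ.get a = τ.get b ∧ ∀ c, τ.get a ≤ τ.get c

theorem hasRepeatedMin_112 : HasRepeatedMin [1, 1, 2] :=
  ⟨(0 : Fin 3), (1 : Fin 3), by decide, by decide, by decide⟩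

theorem hasRepeatedMin_121 : HasRepeatedMin [1, 2, 1] :=
  ⟨(0 : Fin 3), (2 : Fin 3), by decide, by decide, by decide⟩

theorem HasRepeatedMin.wordContains_removeNth_iff {σ : Fin (n + 1) → Fin k}
    (hτ : HasRepeatedMin τ) {p : Fin (n + 1)} (hp : ∀ i, σ p < σ (p.succAbove i)) :
    WordContains (p.removeNth σ) τ ↔ WordContains σ τ := by
  refine ⟨.of_comp p.strictMono_succAbove, fun ⟨f, hf, h⟩ ↦ ?_⟩
  obtain ⟨a, b, hab, heq, hmin⟩ := hτ
  have hp' (q) (hq : σ q ≤ σ p) : q = p := by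
    by_contra hne
    obtain ⟨i, rfl⟩ := Fin.exists_succAbove_eq hne
    exact (hp i).not_ge hq
  -- A copy of `τ` through `p` would repeat the letter `σ p`.
  have hf_ne (c) : f c ≠ p := by
    rintro rfl
    have ha : f a = f c := hp' _ <| not_lt.1 <| (h c a).1.not.2 (hmin c).not_gt
    have hb : f b = f c := by
      rw [hp' (f b) ?_]
      rw [← ha, (h a b).2.2 heq]
    exact hab (hf.injective (ha.trans hb.symm))
  choose g hg using fun c ↦ Fin.exists_succAbove_eq (hf_ne c)
  refine ⟨g, fun c d hcd ↦ p.strictMono_succAbove.lt_iff_lt.1 ?_, fun c d ↦ ?_⟩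
  · rw [hg, hg]
    exact hf hcd
  · simpa only [Fin.removeNth, hg] using h c d

end Patterns

section Words

/-- The words in `[k]^n` avoiding every pattern in `T`, so that `avoiders n k T` is the number of
its elements. -/
def avoidingWords (n k : ℕ) (T : Set (List ℕ)) : Set (Fin n → Fin k) :=
  {σ | ∀ τ ∈ T, ¬ WordContains σ τ}

/-- The words in `[k + 1]^n` avoiding every pattern in `T` and using the smallest letter, which is
encoded as `0`. -/
def avoidingWordsWithZero (n k : ℕ) (T : Set (List ℕ)) : Set (Fin n → Fin (k + 1)) :=
  avoidingWords n (k + 1) T ∩ {σ | ∃ q, σ q = 0}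

variable {n k : ℕ} {T : Set (List ℕ)} {α : Type*}

theorem ncard_avoidingWords : (avoidingWords n k T).ncard = avoiders n k T :=
  (Nat.card_coe_set_eq _).symm

theorem succ_comp_injective : (fun σ : Fin n → Fin k ↦ Fin.succ ∘ σ).Injective :=
  (Fin.succ_injective k).comp_left

theorem succ_comp_mem_avoidingWords {σ : Fin n → Fin k} :
    Fin.succ ∘ σ ∈ avoidingWords n (k + 1) T ↔ σ ∈ avoidingWords n k T := by
  simp only [avoidingWords, mem_ofPred_eq, wordContains_comp_iff Fin.strictMono_succ]

theorem exists_eq_succ_comp {σ : Fin n → Fin (k + 1)} (hσ : ¬ ∃ q, σ q = 0) :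
    ∃ τ : Fin n → Fin k, Fin.succ ∘ τ = σ :=
  ⟨fun q ↦ (σ q).pred fun h ↦ hσ ⟨q, h⟩, funext fun _ ↦ Fin.succ_pred _ _⟩

theorem avoidingWords_diff_withZero :
    avoidingWords n (k + 1) T \ {σ | ∃ q, σ q = 0} =
      (fun σ ↦ Fin.succ ∘ σ) '' avoidingWords n k T := by
  ext σ
  constructor
  · rintro ⟨hσ, hz⟩
    obtain ⟨τ, rfl⟩ := exists_eq_succ_comp hz
    exact ⟨τ, succ_comp_mem_avoidingWords.1 hσ, rfl⟩
  · rintro ⟨τ, hτ, rfl⟩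
    exact ⟨succ_comp_mem_avoidingWords.2 hτ, fun ⟨q, hq⟩ ↦ Fin.succ_ne_zero _ hq⟩

theorem avoiders_succ_right :
    avoiders n (k + 1) T = (avoidingWordsWithZero n k T).ncard + avoiders n k T := by
  rw [← ncard_avoidingWords, ← ncard_inter_add_ncard_sdiff_eq_ncard _ {σ | ∃ q, σ q = 0},
    avoidingWords_diff_withZero, ncard_image_of_injective _ succ_comp_injective,
    ncard_avoidingWords, avoidingWordsWithZero]

/-- The word `w` with the letter `a` inserted at position `p`. -/
abbrev insertLetter (p : Fin (n + 1)) (a : α) (w : Fin n → α) : Fin (n + 1) → α :=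
  Fin.insertNth (α := fun _ ↦ α) p a w

/-- The pairs `(p, w)` such that inserting the letter `a` into `w` at position `p` makes `p` the
last occurrence of `a`. -/
def lastInsertions (n : ℕ) (a : α) : Set (Fin (n + 1) × (Fin n → α)) :=
  {x | IsGreatest {q | insertLetter x.1 a x.2 q = a} x.1}

theorem mem_lastInsertions_iff {p : Fin (n + 1)} {a : α} {w : Fin n → α} :
    (p, w) ∈ lastInsertions n a ↔ ∀ q, insertLetter p a w q = a → q ≤ p :=
  and_iff_right (Fin.insertNth_apply_same ..)

theorem succAbove_lt_of_mem_lastInsertions {p : Fin (n + 1)} {a : α} {w : Fin n → α}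
    (hp : (p, w) ∈ lastInsertions n a) {r : Fin n} (hr : w r = a) : p.succAbove r < p :=
  (mem_lastInsertions_iff.1 hp _ <| by simpa using hr).lt_of_ne
    (Fin.succAbove_ne p r)

theorem exists_isGreatest_setOf_eq {σ : Fin n → α} {a : α} (hσ : ∃ q, σ q = a) :
    ∃ p, IsGreatest {q | σ q = a} p :=
  (toFinite {q | σ q = a}).isCompact.exists_isGreatest hσ

theorem bijOn_insertLetter (a : α) :
    BijOn (fun x : Fin (n + 1) × (Fin n → α) ↦ insertLetter x.1 a x.2) (lastInsertions n a)
      {σ | ∃ q, σ q = a} := by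
  refine ⟨fun x hx ↦ ⟨x.1, hx.1⟩, ?_, fun σ hσ ↦ ?_⟩
  · rintro ⟨p, w⟩ hp ⟨p', w'⟩ hp' h
    simp only [lastInsertions, mem_ofPred_eq] at hp hp' h
    rw [h] at hp
    obtain rfl := hp.unique hp'
    rw [Fin.insertNth_right_injective _ h]
  · obtain ⟨p, hp⟩ := exists_isGreatest_setOf_eq hσ
    have hins : insertLetter p a (p.removeNth σ) = σ := by
      obtain rfl : σ p = a := hp.1
      exact Fin.insertNth_self_removeNth p σ
    exact ⟨(p, p.removeNth σ), by simpa only [lastInsertions, mem_ofPred_eq, hins] using hp, hins⟩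

/-- The pairs `(p, w)` such that inserting `0` into `w` at position `p` makes `p` the last
occurrence of `0`, and yields a word avoiding every pattern in `T`. -/
def avoidingInsertions (n k : ℕ) (T : Set (List ℕ)) : Set (Fin (n + 1) × (Fin n → Fin (k + 1))) :=
  lastInsertions n 0 ∩ {x | insertLetter x.1 0 x.2 ∈ avoidingWords (n + 1) (k + 1) T}

theorem mem_avoidingInsertions_iff {p : Fin (n + 1)} {w : Fin n → Fin (k + 1)} :
    (p, w) ∈ avoidingInsertions n k T ↔
      (p, w) ∈ lastInsertions n 0 ∧ insertLetter p 0 w ∈ avoidingWords (n + 1) (k + 1) T :=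
  .rfl

/-- Every word avoiding `T` and containing a `0` extends in exactly one way to a word avoiding `T`
by the insertion of a new last `0`. -/
def HasUniqueZeroInsertion (T : Set (List ℕ)) : Prop :=
  ∀ ⦃n k : ℕ⦄ ⦃w : Fin n → Fin (k + 1)⦄, w ∈ avoidingWordsWithZero n k T →
    ∃! p, (p, w) ∈ avoidingInsertions n k T

theorem ncard_avoidingInsertions :
    (avoidingInsertions n k T).ncard = (avoidingWordsWithZero (n + 1) k T).ncard := by
  rw [avoidingWordsWithZero, inter_comm]
  exact ((bijOn_insertLetter 0).inter_mapsTo (fun _ hx ↦ hx) inter_subset_right).ncard_eq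

theorem mem_avoidingWords_of_insertLetter {p : Fin (n + 1)} {a : Fin k} {w : Fin n → Fin k}
    (h : insertLetter p a w ∈ avoidingWords (n + 1) k T) : w ∈ avoidingWords n k T :=
  fun τ hτ hw ↦ h τ hτ <| .of_comp p.strictMono_succAbove <| by
    rwa [show insertLetter p a w ∘ p.succAbove = w from Fin.removeNth_insertNth ..]

theorem HasUniqueZeroInsertion.bijOn_snd (hT : HasUniqueZeroInsertion T) :
    BijOn Prod.snd (avoidingInsertions n k T ∩ {x | ∃ q, x.2 q = 0})
      (avoidingWordsWithZero n k T) := by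
  refine ⟨fun x hx ↦ ⟨mem_avoidingWords_of_insertLetter hx.1.2, hx.2⟩, ?_, fun w hw ↦ ?_⟩
  · rintro ⟨p, w⟩ hx ⟨p', w'⟩ hx' rfl
    have hw : w ∈ avoidingWordsWithZero n k T :=
      ⟨mem_avoidingWords_of_insertLetter hx.1.2, hx.2⟩
    rw [(hT hw).unique hx.1 hx'.1]
  · obtain ⟨p, hp, -⟩ := hT hw
    exact ⟨(p, w), ⟨hp, hw.2⟩, rfl⟩

theorem insertLetter_zero_succ_comp_mem_avoidingWords (hT : ∀ τ ∈ T, HasRepeatedMin τ)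
    {p : Fin (n + 1)} {σ : Fin n → Fin k} :
    insertLetter p 0 (Fin.succ ∘ σ) ∈ avoidingWords (n + 1) (k + 1) T ↔
      σ ∈ avoidingWords n k T := by
  refine forall₂_congr fun τ hτ ↦ not_congr ?_
  rw [← (hT τ hτ).wordContains_removeNth_iff (p := p) (by simp), Fin.removeNth_insertNth,
    wordContains_comp_iff Fin.strictMono_succ]

theorem avoidingInsertions_diff_withZero (hT : ∀ τ ∈ T, HasRepeatedMin τ) :
    avoidingInsertions n k T \ {x | ∃ q, x.2 q = 0} =
      univ ×ˢ ((fun σ ↦ Fin.succ ∘ σ) '' avoidingWords n k T) := by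
  ext ⟨p, w⟩
  constructor
  · rintro ⟨⟨-, hw⟩, hz⟩
    obtain ⟨σ, rfl⟩ := exists_eq_succ_comp hz
    exact ⟨mem_univ p, σ, (insertLetter_zero_succ_comp_mem_avoidingWords hT).1 hw, rfl⟩
  · rintro ⟨-, σ, hσ, rfl⟩
    refine ⟨⟨mem_lastInsertions_iff.2 fun q hq ↦ ?_,
      (insertLetter_zero_succ_comp_mem_avoidingWords hT).2 hσ⟩, fun ⟨q, hq⟩ ↦ Fin.succ_ne_zero _ hq⟩
    by_contra hqp
    obtain ⟨i, rfl⟩ := Fin.exists_succAbove_eq (not_le.1 hqp).ne'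
    simp at hq

theorem ncard_avoidingWordsWithZero_succ (hT : ∀ τ ∈ T, HasRepeatedMin τ)
    (hT' : HasUniqueZeroInsertion T) :
    (avoidingWordsWithZero (n + 1) k T).ncard =
      (avoidingWordsWithZero n k T).ncard + (n + 1) * avoiders n k T := by
  rw [← ncard_avoidingInsertions, ← ncard_inter_add_ncard_sdiff_eq_ncard _ {x | ∃ q, x.2 q = 0},
    hT'.bijOn_snd.ncard_eq, avoidingInsertions_diff_withZero hT, ncard_prod, ncard_univ,
    Nat.card_eq_fintype_card, Fintype.card_fin, ncard_image_of_injective _ succ_comp_injective,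
    ncard_avoidingWords]

theorem avoiders_succ_succ (hT : ∀ τ ∈ T, HasRepeatedMin τ) (hT' : HasUniqueZeroInsertion T) :
    avoiders (n + 1) (k + 1) T =
      avoiders (n + 1) k T + avoiders n (k + 1) T + n * avoiders n k T := by
  rw [avoiders_succ_right, ncard_avoidingWordsWithZero_succ hT hT', avoiders_succ_right (n := n)]
  ring

theorem avoiders_zero_left (hT : ∀ τ ∈ T, HasRepeatedMin τ) : avoiders 0 k T = 1 := by
  have hempty (σ : Fin 0 → Fin k) : σ ∈ avoidingWords 0 k T := by
    rintro τ hτ ⟨f, -⟩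
    obtain ⟨a, -⟩ := hT τ hτ
    exact (f a).elim0
  rw [← ncard_avoidingWords, eq_univ_of_forall hempty, ncard_univ, Nat.card_unique]

theorem avoiders_succ_zero : avoiders (n + 1) 0 T = 0 := by
  simp [avoiders]

end Words

section ZeroInsertion

variable {n k : ℕ}

theorem mem_avoidingWords_singleton {σ : Fin n → Fin k} {τ : List ℕ} :
    σ ∈ avoidingWords n k {τ} ↔ ¬ WordContains σ τ := by
  simp only [avoidingWords, mem_ofPred_eq, mem_singleton_iff, forall_eq]

theorem insertLetter_last_zero_mem_avoidingWords_112 {w : Fin n → Fin (k + 1)}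
    (hw : w ∈ avoidingWords n (k + 1) {[1, 1, 2]}) :
    insertLetter (Fin.last n) 0 w ∈ avoidingWords (n + 1) (k + 1) {[1, 1, 2]} := by
  rw [mem_avoidingWords_singleton, wordContains_112_iff] at hw ⊢
  rw [insertLetter, Fin.insertNth_last']
  rintro ⟨i, j, l, hij, hjl, heq, hlt⟩
  obtain ⟨i, rfl⟩ := Fin.exists_castSucc_eq.2 (Fin.ne_last_of_lt hij)
  obtain ⟨j, rfl⟩ := Fin.exists_castSucc_eq.2 (Fin.ne_last_of_lt hjl)
  obtain ⟨l, rfl⟩ | rfl := Fin.eq_castSucc_or_eq_last l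
  · simp only [Fin.snoc_castSucc] at heq hlt
    exact hw ⟨i, j, l, hij, hjl, heq, hlt⟩
  · rw [Fin.snoc_last] at hlt
    exact Fin.not_lt_zero _ hlt

theorem hasUniqueZeroInsertion_112 : HasUniqueZeroInsertion {[1, 1, 2]} := by
  rintro n k w ⟨hw, r, hr⟩
  refine ⟨Fin.last n, ⟨mem_lastInsertions_iff.2 fun q _ ↦ q.le_last,
    insertLetter_last_zero_mem_avoidingWords_112 hw⟩,
    fun p (hp : (p, w) ∈ avoidingInsertions n k _) ↦ ?_⟩
  rw [mem_avoidingInsertions_iff, mem_avoidingWords_singleton, wordContains_112_iff] at hp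
  by_contra hlast
  have hpl : p < Fin.last n := Fin.lt_last_iff_ne_last.2 hlast
  have hpos : insertLetter p 0 w (Fin.last n) ≠ 0 :=
    fun h ↦ (mem_lastInsertions_iff.1 hp.1 _ h).not_gt hpl
  -- An old zero, the new zero and the last letter form a copy of `112`.
  refine hp.2 ⟨_, p, Fin.last n, succAbove_lt_of_mem_lastInsertions hp.1 hr, hpl, ?_, ?_⟩
  · simp [hr]
  · simpa using Fin.pos_of_ne_zero hpos

theorem insertLetter_succ_self {α : Type*} (w : Fin n → α) (r : Fin n) :
    insertLetter r.succ (w r) w = w ∘ r.predAbove := by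
  refine Fin.insertNth_eq_iff.2 ⟨by simp, funext fun j ↦ ?_⟩
  rw [Fin.removeNth, Function.comp_apply, (Fin.succAbove_right_injective (p := r.succ)).eq_iff.1
    (Fin.succ_succAbove_predAbove (Fin.succAbove_ne r.succ j))]

theorem comp_mem_avoidingWords_121 {m : ℕ} {w : Fin n → Fin k} {g : Fin m → Fin n}
    (hg : Monotone g) (hw : w ∈ avoidingWords n k {[1, 2, 1]}) :
    w ∘ g ∈ avoidingWords m k {[1, 2, 1]} := by
  rw [mem_avoidingWords_singleton, wordContains_121_iff] at hw ⊢
  rintro ⟨i, j, l, hij, hjl, heq, hlt⟩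
  simp only [Function.comp_apply] at heq hlt
  refine hw ⟨g i, g j, g l, (hg hij.le).lt_of_ne ?_, (hg hjl.le).lt_of_ne ?_, heq, hlt⟩
  · exact fun h ↦ hlt.ne (congrArg w h)
  · exact fun h ↦ hlt.ne (heq.trans (congrArg w h.symm))

theorem hasUniqueZeroInsertion_121 : HasUniqueZeroInsertion {[1, 2, 1]} := by
  rintro n k w ⟨hw, hz⟩
  obtain ⟨r, hr, hmax⟩ := exists_isGreatest_setOf_eq hz
  rw [mem_ofPred_eq] at hr
  have hdup : insertLetter r.succ 0 w = w ∘ r.predAbove := hr ▸ insertLetter_succ_self w r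
  refine ⟨r.succ, ⟨mem_lastInsertions_iff.2 fun q hq ↦ ?_, ?_⟩,
    fun p (hp : (p, w) ∈ avoidingInsertions n k _) ↦ ?_⟩
  · rw [hdup] at hq
    by_contra! hlt
    have hle : r.predAbove q ≤ r := hmax hq
    rw [Fin.predAbove_of_succ_le r q hlt.le] at hle
    exact hle.not_gt ((Fin.lt_pred_iff _).2 hlt)
  · rw [mem_ofPred_eq, hdup]
    exact comp_mem_avoidingWords_121 r.predAbove_right_monotone hw
  · rw [mem_avoidingInsertions_iff, mem_avoidingWords_singleton, wordContains_121_iff] at hp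
    by_contra hne
    have hrp : p.succAbove r < p := succAbove_lt_of_mem_lastInsertions hp.1 hr
    have hsp : r.succ < p := ((Fin.succAbove_lt_iff_succ_le p r).1 hrp).lt_of_ne' hne
    obtain ⟨s, hs⟩ := Fin.exists_succAbove_eq hsp.ne
    have hrs : r < s := by
      rw [← p.strictMono_succAbove.lt_iff_lt, hs,
        Fin.succAbove_of_castSucc_lt _ _ ((Fin.succAbove_lt_iff_castSucc_lt p r).1 hrp)]
      exact Fin.castSucc_lt_succ
    have hpos : w s ≠ 0 := fun h ↦ (hmax h).not_gt hrs
    -- The old last zero, the letter after it and the new zero form a copy of `121`.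
    refine hp.2 ⟨_, p.succAbove s, p, p.strictMono_succAbove hrs, hs ▸ hsp, ?_, ?_⟩
    · simp [hr]
    · simpa [hr] using Fin.pos_of_ne_zero hpos

end ZeroInsertion

section Stirling

variable {n : ℕ}

/-- The permutation of `Fin (n + 1)` with first value `p` and with the remaining values in the same
relative order as those of `σ`. -/
def permCons (p : Fin (n + 1)) (σ : Equiv.Perm (Fin n)) : Equiv.Perm (Fin (n + 1)) :=
  p.cycleRange.symm * Equiv.Perm.decomposeFin.symm (0, σ)

@[simp]
theorem permCons_zero (p : Fin (n + 1)) (σ : Equiv.Perm (Fin n)) : permCons p σ 0 = p := by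
  simp [permCons]

@[simp]
theorem permCons_succ (p : Fin (n + 1)) (σ : Equiv.Perm (Fin n)) (i : Fin n) :
    permCons p σ i.succ = p.succAbove (σ i) := by
  simp [permCons]

theorem permCons_bijective : (fun x : Fin (n + 1) × Equiv.Perm (Fin n) ↦
    permCons x.1 x.2).Bijective := by
  rw [Fintype.bijective_iff_injective_and_card]
  refine ⟨?_, by simp [Fintype.card_perm, Nat.factorial_succ]⟩
  rintro ⟨p, σ⟩ ⟨p', σ'⟩ h
  obtain rfl : p = p' := by simpa using DFunLike.congr_fun h 0
  obtain rfl : σ = σ' := Equiv.ext fun i ↦ by simpa using DFunLike.congr_fun h i.succ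
  rfl

theorem rlMinCount_permCons (p : Fin (n + 1)) (σ : Equiv.Perm (Fin n)) :
    rlMinCount (permCons p σ) = (if p = 0 then 1 else 0) + rlMinCount σ := by
  have hzero : (∀ s, 0 < s → permCons p σ 0 < permCons p σ s) ↔ p = 0 := by
    constructor
    · intro h
      by_contra hp
      obtain ⟨i, hi⟩ := Fin.exists_succAbove_eq (Ne.symm hp)
      have hlt : permCons p σ 0 < permCons p σ (σ.symm i).succ := h _ (Fin.succ_pos _)
      simp [hi] at hlt
    · rintro rfl s hs
      obtain ⟨i, rfl⟩ := Fin.exists_succ_eq.2 hs.ne'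
      simp
  have hsucc (i : Fin n) :
      (∀ s, i.succ < s → permCons p σ i.succ < permCons p σ s) ↔ ∀ s, i < s → σ i < σ s := by
    simp [Fin.forall_fin_succ, p.strictMono_succAbove.lt_iff_lt]
  simp only [rlMinCount, Finset.card_filter, Fin.sum_univ_succ, hzero, hsucc]

theorem rlMinCount_pos (π : Equiv.Perm (Fin (n + 1))) : 0 < rlMinCount π :=
  Finset.card_pos.2 ⟨Fin.last n, by simp [(Fin.le_last _).not_gt]⟩

theorem stirC_succ_succ (m : ℕ) : stirC (n + 1) (m + 1) = n * stirC n (m + 1) + stirC n m := by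
  have hcons : stirC (n + 1) (m + 1) = Nat.card {x : Fin (n + 1) × Equiv.Perm (Fin n) //
      (if x.1 = 0 then 1 else 0) + rlMinCount x.2 = m + 1} :=
    Nat.card_congr <| ((Equiv.ofBijective _ permCons_bijective).subtypeEquiv
      fun x ↦ by simp [rlMinCount_permCons]).symm
  rw [hcons]
  simp only [stirC, Nat.card_eq_fintype_card, Fintype.card_subtype, Finset.card_filter,
    Fintype.sum_prod_type, Fin.sum_univ_succ]
  simp [Nat.add_comm 1, Nat.add_comm (n * _)]

theorem stirC_eq_stirlingFirst (n m : ℕ) : stirC n m = n.stirlingFirst m := by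
  induction n generalizing m with
  | zero => cases m <;> simp [stirC, rlMinCount]
  | succ n ih =>
    cases m with
    | zero => simp [stirC, (rlMinCount_pos _).ne']
    | succ m => rw [stirC_succ_succ, ih, ih, Nat.stirlingFirst_succ_succ]

end Stirling

section Sum

/-- The sum `∑ c(n, m) C(k + m - 1, n)` over `m ≤ n`, i.e. the sum of the theorem indexed by
`m = n - j`. The truncated subtraction only matters for `k = m = 0`, where it gives the value `1` at
`n = 0`. -/
def stirlingSum (n k : ℕ) : ℕ :=
  ∑ m ∈ Finset.range (n + 1), (k + m - 1).choose n * n.stirlingFirst m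

theorem stirlingSum_zero_left (k : ℕ) : stirlingSum 0 k = 1 := by
  simp [stirlingSum]

theorem stirlingSum_succ_left (n k : ℕ) :
    stirlingSum (n + 1) k =
      ∑ m ∈ Finset.range (n + 1), (k + m).choose (n + 1) * (n + 1).stirlingFirst (m + 1) := by
  rw [stirlingSum, Finset.sum_range_succ']
  simp [← add_assoc]

theorem stirlingSum_succ_zero (n : ℕ) : stirlingSum (n + 1) 0 = 0 := by
  rw [stirlingSum_succ_left]
  refine Finset.sum_eq_zero fun m hm ↦ ?_
  rw [zero_add, Nat.choose_eq_zero_of_lt (Finset.mem_range.1 hm), zero_mul]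

theorem mul_stirlingSum (n k : ℕ) :
    n * stirlingSum n k =
      n * ∑ m ∈ Finset.range (n + 1), (k + m).choose n * n.stirlingFirst (m + 1) := by
  cases n with
  | zero => simp
  | succ n =>
    rw [Finset.sum_range_succ, Nat.stirlingFirst_eq_zero_of_lt (Nat.lt_succ_self _), mul_zero,
      add_zero, stirlingSum_succ_left]

theorem stirlingSum_succ_succ (n k : ℕ) :
    stirlingSum (n + 1) (k + 1) =
      stirlingSum (n + 1) k + stirlingSum n (k + 1) + n * stirlingSum n k := by
  rw [mul_stirlingSum, stirlingSum_succ_left, stirlingSum_succ_left, stirlingSum, Finset.mul_sum,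
    ← Finset.sum_add_distrib, ← Finset.sum_add_distrib]
  refine Finset.sum_congr rfl fun m _ ↦ ?_
  rw [Nat.add_right_comm k 1 m, Nat.add_sub_cancel, Nat.choose_succ_succ,
    Nat.stirlingFirst_succ_succ]
  ring

theorem eq_stirlingSum_of_recurrence {F : ℕ → ℕ → ℕ} (hzero : ∀ k, F 0 k = 1)
    (hsucc_zero : ∀ n, F (n + 1) 0 = 0)
    (hsucc : ∀ n k, F (n + 1) (k + 1) = F (n + 1) k + F n (k + 1) + n * F n k) (n k : ℕ) :
    F n k = stirlingSum n k := by
  induction n generalizing k with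
  | zero => rw [hzero, stirlingSum_zero_left]
  | succ n ihn =>
    induction k with
    | zero => rw [hsucc_zero, stirlingSum_succ_zero]
    | succ k ihk => rw [hsucc, stirlingSum_succ_succ, ihk, ihn, ihn]

theorem sum_range_ite_eq_stirlingSum (n k : ℕ) :
    (∑ j ∈ Finset.range (k + 1),
      if j ≤ n then (n + k - j - 1).choose n * n.stirlingFirst (n - j) else 0) =
      stirlingSum n k := by
  have hfilter : (Finset.range (k + 1)).filter (· ≤ n) = (Finset.range (n + 1)).filter (· ≤ k) := by
    grind
  rw [← Finset.sum_filter, hfilter, Finset.sum_filter_of_ne, stirlingSum, ← Finset.sum_flip]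
  · refine Finset.sum_congr rfl fun j hj ↦ ?_
    have hjn : j ≤ n := Finset.mem_range_succ_iff.1 hj
    rw [show n + k - (n - j) = k + j by lia, Nat.sub_sub_self hjn]
  · intro j hj hne
    by_contra! hkj
    have hjn : j ≤ n := Finset.mem_range_succ_iff.1 hj
    exact hne <| by rw [Nat.choose_eq_zero_of_lt (by lia), zero_mul]

end Sum

theorem avoiders_eq_stirlingSum {T : Set (List ℕ)} (hT : ∀ τ ∈ T, HasRepeatedMin τ)
    (hT' : HasUniqueZeroInsertion T) (n k : ℕ) : avoiders n k T = stirlingSum n k :=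
  eq_stirlingSum_of_recurrence (F := fun n k ↦ avoiders n k T) (fun _ ↦ avoiders_zero_left hT)
    (fun _ ↦ avoiders_succ_zero) (fun _ _ ↦ avoiders_succ_succ hT hT') n k

/-- f_{112}(n,k) = f_{121}(n,k) = ∑_{j=0}^{k} C(n+k-j-1, n)·c(n, n-j),
where terms with n - j < 0 are taken to be 0. -/
theorem avoid_112_formula (n k : ℕ) :
    avoiders n k {[1, 1, 2]} =
      (∑ j ∈ Finset.range (k + 1),
        if j ≤ n then (n + k - j - 1).choose n * stirC n (n - j) else 0) ∧
    avoiders n k {[1, 2, 1]} =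
      (∑ j ∈ Finset.range (k + 1),
        if j ≤ n then (n + k - j - 1).choose n * stirC n (n - j) else 0) := by
  simp only [stirC_eq_stirlingFirst, sum_range_ite_eq_stirlingSum]
  constructor
  · exact avoiders_eq_stirlingSum (by simp [hasRepeatedMin_112]) hasUniqueZeroInsertion_112 n k
  · exact avoiders_eq_stirlingSum (by simp [hasRepeatedMin_121]) hasUniqueZeroInsertion_121 n k
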